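/- Let p be an odd prime with p ≠ 3 and p ≠ 5, and set ℓ = 2(p−1), m = ℓ/4 = (p−1)/2, c_ℓ = (−1)^m + 2^{(ℓ−4)/2} = (−1)^{(p−1)/2} + 2^{p−3}. Then every coefficient of the polynomial P_ℓ(T) = (1/c_ℓ)·((−1)^m + 2^{(ℓ−4)/2}T^{ℓ−4})/(1 − 2T + 2T²) ∈ ℚ[T] is p-integral. -/

import Mathlib

open Polynomial

/-- The zeta polynomial `P_ℓ(T) = (1/c_ℓ)·((−1)^{ℓ/4} + 2^{(ℓ−4)/2}·T^{ℓ−4})/(1 − 2T + 2T²)`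
of the normalized Eisenstein polynomial, where `c_ℓ = (−1)^{ℓ/4} + 2^{(ℓ−4)/2}`.
The division is exact in `ℚ[T]` (Euclidean division). -/
noncomputable def zetaPolyEis (ℓ : ℕ) : Polynomial ℚ :=
  Polynomial.C (((-1 : ℚ) ^ (ℓ / 4) + 2 ^ ((ℓ - 4) / 2))⁻¹) *
    ((Polynomial.C ((-1 : ℚ) ^ (ℓ / 4)) +
        Polynomial.C ((2 : ℚ) ^ ((ℓ - 4) / 2)) * Polynomial.X ^ (ℓ - 4)) /
      (1 - 2 * Polynomial.X + 2 * Polynomial.X ^ 2))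

/-!
By Sophie Germain's identity `1 - 2T + 2T²` divides `4T⁴ + 1`, which in turn divides
`(4T⁴) ^ n - (-1) ^ n`, the numerator of `c_ℓ · P_ℓ` for `ℓ = 4(n + 1)`. Hence `c_ℓ · P_ℓ` has
integer coefficients, and `P_ℓ` is `p`-integral as soon as `p ∤ c_ℓ`. For `ℓ = 2(p - 1)`, Fermat's
little theorem gives `4 c_ℓ ≡ 1 ± 4 (mod p)`, so `p ∣ c_ℓ` would force `p ∣ 5` or `p ∣ 3`.
-/

theorem one_sub_two_mul_add_two_mul_sq_dvd {R : Type*} [CommRing R] (x : R) (n : ℕ) :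
    1 - 2 * x + 2 * x ^ 2 ∣ (-1) ^ (n + 1) + (4 * x ^ 4) ^ n := by
  have sophie_germain : 4 * x ^ 4 - -1 = (1 - 2 * x + 2 * x ^ 2) * (1 + 2 * x + 2 * x ^ 2) := by
    ring
  calc
    1 - 2 * x + 2 * x ^ 2 ∣ 4 * x ^ 4 - -1 := Dvd.intro _ sophie_germain.symm
    _ ∣ (4 * x ^ 4) ^ n - (-1) ^ n := sub_dvd_pow_sub_pow _ _ n
    _ = (-1) ^ (n + 1) + (4 * x ^ 4) ^ n := by ring

theorem padicValRat_inv_mul_intCast_nonneg {p : ℕ} [Fact p.Prime] {c : ℤ} (hc : ¬(p : ℤ) ∣ c)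
    (a : ℤ) : 0 ≤ padicValRat p ((c : ℚ)⁻¹ * a) := by
  rcases eq_or_ne a 0 with rfl | ha
  · simp
  have hc0 : c ≠ 0 := fun h ↦ hc (h ▸ dvd_zero _)
  rw [padicValRat.mul (inv_ne_zero (Int.cast_ne_zero.mpr hc0)) (Int.cast_ne_zero.mpr ha),
    padicValRat.inv, padicValRat.of_int, padicValRat.of_int, padicValInt.eq_zero_of_not_dvd hc]
  simp

/-- The constant `c_ℓ` normalizing the zeta polynomial `P_ℓ`, as an integer, so that its
divisibility by primes can be discussed. The subtraction truncates, so this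
is the formula for `c_ℓ` only when `ℓ ≥ 4` is divisible by `4`. -/
def zetaConstEis (ℓ : ℕ) : ℤ :=
  (-1) ^ (ℓ / 4) + 2 ^ ((ℓ - 4) / 2)

theorem exists_zetaPolyEis_eq_C_inv_mul_map {ℓ : ℕ} (hℓ : 4 ∣ ℓ) (hℓ0 : ℓ ≠ 0) :
    ∃ Q : ℤ[X], zetaPolyEis ℓ = C (zetaConstEis ℓ : ℚ)⁻¹ * Q.map (Int.castRingHom ℚ) := by
  obtain ⟨n, rfl⟩ : ∃ n, ℓ = 4 * (n + 1) := by
    obtain ⟨m, rfl⟩ := hℓ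
    exact ⟨m - 1, by omega⟩
  obtain ⟨Q, hQ⟩ := one_sub_two_mul_add_two_mul_sq_dvd (X : ℤ[X]) n
  have hfour : C (2 : ℚ) ^ 2 = 4 := by
    rw [C_ofNat]
    norm_num
  have hdenom : (1 - 2 * X + 2 * X ^ 2 : ℚ[X]) ≠ 0 := fun h ↦ by
    simpa using congrArg (eval 0) h
  have hnum : C ((-1 : ℚ) ^ (n + 1)) + C ((2 : ℚ) ^ (2 * n)) * X ^ (4 * n) =
      (1 - 2 * X + 2 * X ^ 2) * Q.map (Int.castRingHom ℚ) := by
    calc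
      _ = ((-1) ^ (n + 1) + (4 * X ^ 4) ^ n : ℤ[X]).map (Int.castRingHom ℚ) := by
        simp [mul_pow, pow_mul, hfour]
      _ = (1 - 2 * X + 2 * X ^ 2) * Q.map (Int.castRingHom ℚ) := by
        rw [hQ]
        simp
  have hdiv : 4 * (n + 1) / 4 = n + 1 := by omega
  have hsub : 4 * (n + 1) - 4 = 4 * n := by omega
  have hhalf : 4 * n / 2 = 2 * n := by omega
  refine ⟨Q, ?_⟩
  rw [zetaPolyEis, zetaConstEis, hdiv, hsub, hhalf, hnum, mul_div_cancel_left₀ _ hdenom]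
  push_cast
  rfl

theorem padicValRat_coeff_zetaPolyEis_nonneg {p : ℕ} [Fact p.Prime] {ℓ : ℕ} (hℓ : 4 ∣ ℓ)
    (hℓ0 : ℓ ≠ 0) (hc : ¬(p : ℤ) ∣ zetaConstEis ℓ) (k : ℕ) :
    0 ≤ padicValRat p ((zetaPolyEis ℓ).coeff k) := by
  obtain ⟨Q, hQ⟩ := exists_zetaPolyEis_eq_C_inv_mul_map hℓ hℓ0
  rw [hQ, coeff_C_mul, coeff_map, eq_intCast]
  exact padicValRat_inv_mul_intCast_nonneg hc _

theorem four_mul_zetaConstEis_modEq {p : ℕ} (hp : p.Prime) (hodd : Odd p) :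
    4 * zetaConstEis (2 * (p - 1)) ≡ 4 * (-1) ^ ((p - 1) / 2) + 1 [ZMOD p] := by
  have hp3 : 3 ≤ p := by
    have := hp.two_le
    obtain ⟨r, hr⟩ := hodd
    omega
  have hcop : IsCoprime (2 : ℤ) p := Nat.isCoprime_iff_coprime.mpr hodd.coprime_two_left
  have hm : 2 * (p - 1) / 4 = (p - 1) / 2 := by omega
  have hexp : (2 * (p - 1) - 4) / 2 = p - 3 := by omega
  calc
    4 * zetaConstEis (2 * (p - 1)) = 4 * (-1) ^ ((p - 1) / 2) + 2 ^ (p - 3 + 2) := by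
      rw [zetaConstEis, hm, hexp]
      ring
    _ = 4 * (-1) ^ ((p - 1) / 2) + 2 ^ (p - 1) := by
      rw [show p - 3 + 2 = p - 1 by omega]
    _ ≡ 4 * (-1) ^ ((p - 1) / 2) + 1 [ZMOD p] :=
      (Int.ModEq.pow_card_sub_one_eq_one hp hcop).add_left _

theorem not_dvd_zetaConstEis {p : ℕ} (hp : p.Prime) (hodd : Odd p) (h3 : p ≠ 3) (h5 : p ≠ 5) :
    ¬(p : ℤ) ∣ zetaConstEis (2 * (p - 1)) := by
  intro hdvd
  have hdvd' : (p : ℤ) ∣ 4 * (-1) ^ ((p - 1) / 2) + 1 :=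
    (four_mul_zetaConstEis_modEq hp hodd).dvd_iff.mp (hdvd.mul_left 4)
  rcases neg_one_pow_eq_or ℤ ((p - 1) / 2) with hsign | hsign <;> rw [hsign] at hdvd'
  · have : p ∣ 5 := by exact_mod_cast hdvd'
    exact h5 ((Nat.prime_dvd_prime_iff_eq hp Nat.prime_five).mp this)
  · have : p ∣ 3 := by
      rw [show (4 * -1 + 1 : ℤ) = -(3 : ℕ) by norm_num, dvd_neg] at hdvd'
      exact_mod_cast hdvd'
    exact h3 ((Nat.prime_dvd_prime_iff_eq hp Nat.prime_three).mp this)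

/-- For an odd prime `p` with `p ≠ 3, 5`, every coefficient of the zeta polynomial
`P_{2(p−1)}` of the normalized Eisenstein polynomial `φ̃_{2(p−1)}` is `p`-integral. -/
theorem zetaPolyEis_coeff_p_integral (p : ℕ) (hp : p.Prime) (hodd : Odd p)
    (h3 : p ≠ 3) (h5 : p ≠ 5) (k : ℕ) :
    0 ≤ padicValRat p ((zetaPolyEis (2 * (p - 1))).coeff k) := by
  have : Fact p.Prime := ⟨hp⟩
  have hfour : 4 ∣ 2 * (p - 1) := mul_dvd_mul_left 2 (Nat.Odd.sub_odd hodd odd_one).two_dvd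
  have hpos : 2 * (p - 1) ≠ 0 := by have := hp.two_le; omega
  exact padicValRat_coeff_zetaPolyEis_nonneg hfour hpos (not_dvd_zetaConstEis hp hodd h3 h5) k
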